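/- Let ℋ be a finite-dimensional complex Hilbert space, t₀ ≤ t₁, and let H, R : [t₀,t₁] → ℒ(ℋ) be continuous families of self-adjoint operators. Fix ε, δ > 0 and n ∈ ℕ, and let U(t,s) and V(t,s) be the unitary propagators solving iεδ ∂_t U(t,s) = H(t) U(t,s) and iεδ ∂_t V(t,s) = (H(t) + ε^{n+1} R(t)) V(t,s), with U(s,s) = V(s,s) = 1 and U(s,t) := U(t,s)^{−1}, V(s,t) := V(t,s)^{−1}. Then for every positive semidefinite Π₀ ∈ ℒ(ℋ), every O ∈ ℒ(ℋ) and every t ∈ [t₀,t₁]: |tr( (V(t,t₀) Π₀ V(t₀,t) − U(t,t₀) Π₀ U(t₀,t)) O )| ≤ (t−t₀) · (ε^n/δ) · tr(Π₀) · sup_{s∈[t₀,t]} ‖[R(s), U(s,t) O U(t,s)]‖. -/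

import Mathlib

open ContinuousLinearMap

noncomputable section

theorem aux_trace_le {ℋ : Type*} [NormedAddCommGroup ℋ] [InnerProductSpace ℂ ℋ]
    [FiniteDimensional ℂ ℋ] (A C : ℋ →L[ℂ] ℋ) (hA : A.IsPositive) :
    ‖LinearMap.trace ℂ ℋ (A * C).toLinearMap‖
      ≤ (LinearMap.trace ℂ ℋ A.toLinearMap).re * ‖C‖ := by
  have hs : A.toLinearMap.IsSymmetric := hA.isSymmetric
  set b := hs.eigenvectorBasis rfl with hb
  set l := hs.eigenvalues rfl with hl
  have hAb : ∀ i, A (b i) = (l i : ℂ) • b i := fun i => hs.apply_eigenvectorBasis rfl i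
  have hl0 : ∀ i, 0 ≤ l i := by
    intro i
    have h := hA.re_inner_nonneg_left (b i)
    rw [hAb, inner_smul_left] at h
    simpa [inner_self_eq_norm_sq_to_K] using h
  have h1 : LinearMap.trace ℂ ℋ A.toLinearMap = ∑ i, (l i : ℂ) := by
    rw [LinearMap.trace_eq_sum_inner _ b]
    refine Finset.sum_congr rfl fun i _ => ?_
    simp [-Complex.coe_smul, hAb, inner_smul_right, inner_self_eq_norm_sq_to_K]
  have h2 : LinearMap.trace ℂ ℋ (A * C).toLinearMap
      = ∑ i, (l i : ℂ) * inner ℂ (b i) (C (b i)) := by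
    have : LinearMap.trace ℂ ℋ (A * C).toLinearMap = LinearMap.trace ℂ ℋ (C * A).toLinearMap :=
      LinearMap.trace_mul_comm ℂ A.toLinearMap C.toLinearMap
    rw [this, LinearMap.trace_eq_sum_inner _ b]
    refine Finset.sum_congr rfl fun i _ => ?_
    simp [-Complex.coe_smul, hAb, inner_smul_right]
  rw [h1, h2, Complex.re_sum, Finset.sum_mul]
  refine (norm_sum_le _ _).trans (Finset.sum_le_sum fun i _ => ?_)
  rw [norm_mul, Complex.norm_real, Real.norm_of_nonneg (hl0 i), Complex.ofReal_re]
  refine mul_le_mul_of_nonneg_left ?_ (hl0 i)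
  refine (norm_inner_le_norm _ _).trans ?_
  have := C.le_opNorm (b i)
  simpa using this

/-- the trace as a continuous linear functional -/
def auxT (ℋ : Type*) [NormedAddCommGroup ℋ] [InnerProductSpace ℂ ℋ]
    [FiniteDimensional ℂ ℋ] : (ℋ →L[ℂ] ℋ) →L[ℂ] ℂ :=
  LinearMap.toContinuousLinearMap (LinearMap.trace ℂ ℋ ∘ₗ ContinuousLinearMap.coeLM ℂ)

theorem auxT_apply {ℋ : Type*} [NormedAddCommGroup ℋ] [InnerProductSpace ℂ ℋ]
    [FiniteDimensional ℂ ℋ] (A : ℋ →L[ℂ] ℋ) :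
    auxT ℋ A = LinearMap.trace ℂ ℋ A.toLinearMap := rfl

theorem auxT_comm {ℋ : Type*} [NormedAddCommGroup ℋ] [InnerProductSpace ℂ ℋ]
    [FiniteDimensional ℂ ℋ] (A B : ℋ →L[ℂ] ℋ) :
    auxT ℋ (A * B) = auxT ℋ (B * A) :=
  LinearMap.trace_mul_comm ℂ A.toLinearMap B.toLinearMap

theorem aux_conj {ℋ : Type*} [NormedAddCommGroup ℋ] [InnerProductSpace ℂ ℋ]
    [FiniteDimensional ℂ ℋ] (U : ℝ → ℝ → ℋ →L[ℂ] ℋ) (K X : ℋ →L[ℂ] ℋ) (c : ℂ)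
    (hc : star c = -c) (hK : IsSelfAdjoint K)
    (hunit : ∀ t u : ℝ, adjoint (U t u) = U u t) (s a : ℝ)
    (h : HasDerivAt (fun τ => U τ a) (c • (K * U s a)) s) :
    HasDerivAt (fun τ => U τ a * X * U a τ)
      (c • (K * (U s a * X * U a s) - (U s a * X * U a s) * K)) s := by
  have h2 : HasDerivAt (fun τ => U a τ) (-c • (U a s * K)) s := by
    have := h.star
    simp only [star_smul, star_mul, hc, hK.star_eq, ContinuousLinearMap.star_eq_adjoint, hunit] at this
    exact this
  have h3 := (h.mul_const X).mul h2
  refine HasDerivAt.congr_deriv h3 ?_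
  simp only [smul_mul_assoc, mul_smul_comm, neg_smul, smul_sub, mul_assoc, sub_eq_add_neg, mul_neg, smul_add, smul_neg]

/-- comparison of the propagators of `H(t)` and of `H(t) + ε^{n+1} R(t)` on the
adiabatic time scale: for every positive semidefinite `Pi0`, every observable `O` and every
`t ∈ [t₀,t₁]`,
`|tr((V(t,t₀)Pi0V(t₀,t) − U(t,t₀)Pi0U(t₀,t)) O)|
   ≤ (t−t₀)·(ε^n/δ)·tr(Pi0)·sup_{s∈[t₀,t]} ‖[R(s), U(s,t) O U(t,s)]‖`. -/
theorem stmt14 {ℋ : Type*} [NormedAddCommGroup ℋ] [InnerProductSpace ℂ ℋ]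
    [FiniteDimensional ℂ ℋ]
    (t₀ t₁ : ℝ) (ht : t₀ ≤ t₁)
    (H R : ℝ → ℋ →L[ℂ] ℋ)
    (hHcont : ContinuousOn H (Set.Icc t₀ t₁)) (hRcont : ContinuousOn R (Set.Icc t₀ t₁))
    (hHsa : ∀ t ∈ Set.Icc t₀ t₁, IsSelfAdjoint (H t))
    (hRsa : ∀ t ∈ Set.Icc t₀ t₁, IsSelfAdjoint (R t))
    (ε δ : ℝ) (hε : 0 < ε) (hδ : 0 < δ) (n : ℕ)
    (U V : ℝ → ℝ → ℋ →L[ℂ] ℋ)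
    -- U and V are the unitary propagators of the two evolutions:
    (hUid : ∀ u : ℝ, U u u = 1) (hVid : ∀ u : ℝ, V u u = 1)
    (hUgroup : ∀ t u : ℝ, U t u * U u t = 1) (hVgroup : ∀ t u : ℝ, V t u * V u t = 1)
    (hUunit : ∀ t u : ℝ, adjoint (U t u) = U u t) (hVunit : ∀ t u : ℝ, adjoint (V t u) = V u t)
    (hU : ∀ u : ℝ, ∀ t ∈ Set.Icc t₀ t₁,
      HasDerivAt (fun τ => U τ u)
        ((-Complex.I * ((ε : ℂ) * (δ : ℂ))⁻¹) • (H t * U t u)) t)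
    (hV : ∀ u : ℝ, ∀ t ∈ Set.Icc t₀ t₁,
      HasDerivAt (fun τ => V τ u)
        ((-Complex.I * ((ε : ℂ) * (δ : ℂ))⁻¹) • ((H t + ε ^ (n + 1) • R t) * V t u)) t)
    (Pi0 : ℋ →L[ℂ] ℋ) (hPi0 : Pi0.IsPositive)
    (O : ℋ →L[ℂ] ℋ) (t : ℝ) (htmem : t ∈ Set.Icc t₀ t₁) :
    ‖LinearMap.trace ℂ ℋ
        ((V t t₀ * Pi0 * V t₀ t - U t t₀ * Pi0 * U t₀ t) * O).toLinearMap‖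
      ≤ (t - t₀) * (ε ^ n / δ) * (LinearMap.trace ℂ ℋ Pi0.toLinearMap).re
          * ⨆ u ∈ Set.Icc t₀ t, ‖R u * (U u t * O * U t u) - (U u t * O * U t u) * R u‖ := by
  set c : ℂ := -Complex.I * ((ε : ℂ) * (δ : ℂ))⁻¹ with hcdef
  have hc : star c = -c := by simp [hcdef]
  set S : ℝ := ⨆ u ∈ Set.Icc t₀ t, ‖R u * (U u t * O * U t u) - (U u t * O * U t u) * R u‖ with hS
  have hsub : Set.Icc t₀ t ⊆ Set.Icc t₀ t₁ := Set.Icc_subset_Icc_right htmem.2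
  have hB : ∀ u ∈ Set.Icc t₀ t, HasDerivAt (fun τ => U τ t * O * U t τ)
      (c • (H u * (U u t * O * U t u) - (U u t * O * U t u) * H u)) u := fun u hu =>
    aux_conj U (H u) O c hc (hHsa u (hsub hu)) hUunit u t (hU t u (hsub hu))
  have hA : ∀ u ∈ Set.Icc t₀ t, HasDerivAt (fun τ => V τ t₀ * Pi0 * V t₀ τ)
      (c • ((H u + ε ^ (n + 1) • R u) * (V u t₀ * Pi0 * V t₀ u)
        - (V u t₀ * Pi0 * V t₀ u) * (H u + ε ^ (n + 1) • R u))) u := fun u hu =>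
    aux_conj V _ Pi0 c hc ((hHsa u (hsub hu)).add
      (IsSelfAdjoint.smul (IsSelfAdjoint.all _) (hRsa u (hsub hu)))) hVunit u t₀ (hV t₀ u (hsub hu))
  -- the supremum bounds the commutator
  have hSle : ∀ u ∈ Set.Icc t₀ t,
      ‖R u * (U u t * O * U t u) - (U u t * O * U t u) * R u‖ ≤ S := by
    have hcont : ContinuousOn
        (fun u => ‖R u * (U u t * O * U t u) - (U u t * O * U t u) * R u‖) (Set.Icc t₀ t) := by
      have h1 : ContinuousOn (fun τ => U τ t * O * U t τ) (Set.Icc t₀ t) := fun u hu =>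
        (hB u hu).continuousAt.continuousWithinAt
      have h2 := hRcont.mono hsub
      exact ((h2.mul h1).sub (h1.mul h2)).norm
    obtain ⟨M, hM⟩ := isCompact_Icc.bddAbove_image hcont
    intro u hu
    have hbdd : BddAbove (Set.range fun u => ⨆ (_ : u ∈ Set.Icc t₀ t),
        ‖R u * (U u t * O * U t u) - (U u t * O * U t u) * R u‖) := by
      refine ⟨max M 0, ?_⟩
      rintro _ ⟨v, rfl⟩
      by_cases hv : v ∈ Set.Icc t₀ t
      · simp only [hv, ciSup_unique]
        exact le_max_of_le_left (hM ⟨v, hv, rfl⟩)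
      · simp only [hv, Real.iSup_of_isEmpty]
        exact le_max_right _ _
    have := le_ciSup hbdd u
    simp only [hu, ciSup_unique] at this
    exact this
  have hder : ∀ u ∈ Set.Icc t₀ t, HasDerivAt
      (fun τ => auxT ℋ ((V τ t₀ * Pi0 * V t₀ τ) * (U τ t * O * U t τ)))
      (-(c * (ε : ℂ) ^ (n + 1)) * auxT ℋ ((V u t₀ * Pi0 * V t₀ u) *
        (R u * (U u t * O * U t u) - (U u t * O * U t u) * R u))) u := by
    intro u hu
    have h1 := ((auxT ℋ).restrictScalars ℝ).hasFDerivAt.comp_hasDerivAt u ((hA u hu).mul (hB u hu))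
    refine h1.congr_deriv ?_
    generalize V u t₀ * Pi0 * V t₀ u = A
    generalize U u t * O * U t u = B
    have hr : ε ^ (n + 1) • R u = ((ε : ℂ) ^ (n + 1)) • R u := by
      rw [← Complex.ofReal_pow, Complex.coe_smul]
    rw [hr]
    have e1 : auxT ℋ (H u * (A * B)) = auxT ℋ (A * (B * H u)) := by
      rw [auxT_comm, mul_assoc]
    have e2 : auxT ℋ (R u * (A * B)) = auxT ℋ (A * (B * R u)) := by
      rw [auxT_comm, mul_assoc]
    simp only [ContinuousLinearMap.coe_restrictScalars', map_add, map_sub, map_smul, add_mul,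
      sub_mul, mul_add, mul_sub, smul_mul_assoc, mul_smul_comm, smul_eq_mul, mul_assoc, e1, e2]
    ring
  have htr : ∀ u, auxT ℋ (V u t₀ * Pi0 * V t₀ u) = auxT ℋ Pi0 := by
    intro u
    rw [auxT_comm, ← mul_assoc, hVgroup, one_mul]
  have hcn : ‖-(c * (ε : ℂ) ^ (n + 1))‖ = ε ^ n / δ := by
    rw [norm_neg, hcdef]
    simp only [norm_mul, norm_neg, Complex.norm_I, norm_inv, norm_pow, Complex.norm_real,
      Real.norm_of_nonneg hε.le, Real.norm_of_nonneg hδ.le]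
    field_simp
    ring
  have hbound : ∀ u ∈ Set.Ico t₀ t, ‖-(c * (ε : ℂ) ^ (n + 1)) * auxT ℋ ((V u t₀ * Pi0 * V t₀ u) *
        (R u * (U u t * O * U t u) - (U u t * O * U t u) * R u))‖
      ≤ ε ^ n / δ * ((auxT ℋ Pi0).re * S) := by
    intro u hu'
    have hu := Set.Ico_subset_Icc_self hu'
    have hpos : (V u t₀ * Pi0 * V t₀ u).IsPositive := by
      have := hPi0.conj_adjoint (V u t₀)
      rw [hVunit] at this
      exact this
    rw [norm_mul, hcn]
    refine mul_le_mul_of_nonneg_left ?_ (by positivity)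
    have h1 := aux_trace_le _ (R u * (U u t * O * U t u) - (U u t * O * U t u) * R u) hpos
    rw [← auxT_apply, ← auxT_apply, htr] at h1
    refine h1.trans (mul_le_mul_of_nonneg_left (hSle u hu) ?_)
    have h2 := aux_trace_le _ (1 : ℋ →L[ℂ] ℋ) hPi0
    rw [← auxT_apply] at h2
    have h3 : 0 ≤ (auxT ℋ Pi0).re * ‖(1 : ℋ →L[ℂ] ℋ)‖ := (norm_nonneg _).trans h2
    rcases subsingleton_or_nontrivial ℋ with hs | hn
    · have : Pi0 = 0 := Subsingleton.elim _ _
      simp [this]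
    · simpa using h3
  have hmain := norm_image_sub_le_of_norm_deriv_le_segment'
    (fun u hu => (hder u hu).hasDerivWithinAt) hbound t (Set.right_mem_Icc.2 htmem.1)
  have hfin : auxT ℋ ((V t t₀ * Pi0 * V t₀ t) * (U t t * O * U t t))
      - auxT ℋ ((V t₀ t₀ * Pi0 * V t₀ t₀) * (U t₀ t * O * U t t₀))
      = auxT ℋ ((V t t₀ * Pi0 * V t₀ t - U t t₀ * Pi0 * U t₀ t) * O) := by
    rw [hUid, hVid, sub_mul, map_sub]
    simp only [one_mul, mul_one]
    congr 1
    rw [← mul_assoc, auxT_comm]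
    simp only [mul_assoc]
  rw [hfin] at hmain
  rw [← auxT_apply, ← auxT_apply]
  refine hmain.trans (le_of_eq ?_)
  ring
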